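/- Let X be a compact metric space of finite covering dimension, let n be a positive integer, and let a ∈ M_n(C(X)) be positive. Suppose l, k ∈ ℕ satisfy k ≤ n, l ≤ dim(X), 4·dim(X) ≤ k − l, and l ≤ rank(a(x)) ≤ k for all x ∈ X. Then there is a homotopy h : [0,1] → M_n(C(X))₊ such that: (i) h(0) = a; (ii) l ≤ rank(h(t)(x)) ≤ k for all x ∈ X and t ∈ [0,1]; (iii) rank(h(1)(x)) ≥ l + dim(X) for all x ∈ X. -/

import Mathlib

open scoped ComplexOrder unitInterval

/-- `X` has Lebesgue covering dimension at most `d`: every open cover admits an open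
refinement in which every point belongs to at most `d + 1` members. -/
def HasCovDimLE (X : Type*) [TopologicalSpace X] (d : ℕ) : Prop :=
  ∀ 𝒰 : Set (Set X), (∀ U ∈ 𝒰, IsOpen U) → ⋃₀ 𝒰 = Set.univ →
    ∃ 𝒱 : Set (Set X), (∀ V ∈ 𝒱, IsOpen V) ∧ ⋃₀ 𝒱 = Set.univ ∧
      (∀ V ∈ 𝒱, ∃ U ∈ 𝒰, V ⊆ U) ∧
      ∀ x : X, {V ∈ 𝒱 | x ∈ V}.Finite ∧ {V ∈ 𝒱 | x ∈ V}.ncard ≤ d + 1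

/-- `X` has Lebesgue covering dimension exactly `d`: `d` is the least natural number
such that `HasCovDimLE X d`. -/
def IsCovDim (X : Type*) [TopologicalSpace X] (d : ℕ) : Prop :=
  HasCovDimLE X d ∧ ∀ e : ℕ, HasCovDimLE X e → d ≤ e

/-!
Linearly dependent `l`-tuples in `𝕜^m` are covered by finitely many smooth images of a space of
real codimension `(m - l + 1) * dim_ℝ 𝕜`, which exceeds `d` exactly when `l + ⌊d / dim_ℝ 𝕜⌋ ≤ m`.
In that case a generic map that factors through the nerve of a cover of order at most `d` avoids
them: each of its values is a combination of at most `d + 1` vertices, so a count of dimensions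
shows that almost every placement of the vertices is good. Hence maps `X → (𝕜^m)^l` that are
independent at every point are dense.

Where a minor `A * a x * R` of size `l` is invertible, `g ↦ R * g` turns such maps into matrices `S`
with `l ≤ rank (a x * S x)`, and intersecting finitely many open dense sets gives one
`S : X → M_{n,m}(𝕜)` that works for every `x`. Then `b = (a S) (a S)ᴴ` has rank between `l` and `m`,
and its range is contained in that of `a`. Adding positive semidefinite matrices never lowers the
rank, so along the segment from `a` to `b` the rank stays at least `l` and at most `rank a`, and the
room below `k` left by `b` allows the second segment from `b` to `b + P` for a constant positive `P`
of the desired rank.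
-/

open Module (finrank)

section GeneralPosition

variable {ι κ E P : Type*} [Fintype ι] [NormedAddCommGroup E] [NormedSpace ℝ E]
  [FiniteDimensional ℝ E] [NormedAddCommGroup P] [NormedSpace ℝ P] [FiniteDimensional ℝ P]

theorem dimH_setOf_exists_add_sum_smul_mem_range_le {F : P → E} (hF : ContDiff ℝ 1 F) (i : ι)
    (T : Finset {j // j ≠ i}) :
    dimH {v : ι → E | ∃ c : {j // j ≠ i} → ℝ, v i + ∑ j ∈ T, c j • v j ∈ Set.range F} ≤
      ((Fintype.card ι - 1) * finrank ℝ E + T.card + finrank ℝ P : ℕ) := by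
  classical
  let Φ : ({j // j ≠ i} → E) × (T → ℝ) × P → ι → E := fun q j =>
    if h : j = i then F q.2.2 - ∑ t : T, q.2.1 t • q.1 t else q.1 ⟨j, h⟩
  have hΦ : ContDiff ℝ 1 Φ := by
    refine contDiff_pi.2 fun j => ?_
    by_cases h : j = i
    · simp only [Φ, h, dite_true]
      fun_prop
    · simp only [Φ, h, dite_false]
      fun_prop
  have hrange : {v : ι → E | ∃ c : {j // j ≠ i} → ℝ, v i + ∑ j ∈ T, c j • v j ∈ Set.range F} ⊆
      Set.range Φ := by
    rintro v ⟨c, p, hp⟩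
    refine ⟨(fun j => v j, fun t => c t, p), funext fun j => ?_⟩
    by_cases h : j = i
    · subst h
      simp only [Φ, dite_true, hp, Finset.sum_coe_sort T fun t => c t • v t, add_sub_cancel_right]
    · simp only [Φ, h, dite_false]
  calc dimH _ ≤ dimH (Set.range Φ) := dimH_mono hrange
    _ ≤ finrank ℝ (({j // j ≠ i} → E) × (T → ℝ) × P) := hΦ.dimH_range_le
    _ = _ := by simp [Module.finrank_pi_fintype, add_assoc]

theorem exists_add_sum_smul_mem {K V : Type*} [Field K] [AddCommGroup V] [Module K V] {d : ℕ}
    {Z : Set V} (hZ : ∀ t : K, t ≠ 0 → ∀ z ∈ Z, t • z ∈ Z) {v : ι → V} {c : ι → K} (hc : c ≠ 0)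
    (hcard : {i | c i ≠ 0}.ncard ≤ d + 1) (hcv : ∑ i, c i • v i ∈ Z) :
    ∃ (i : ι) (T : Finset {j // j ≠ i}) (c' : {j // j ≠ i} → K),
      T.card ≤ d ∧ v i + ∑ j ∈ T, c' j • v j ∈ Z := by
  classical
  obtain ⟨i, hi⟩ := Function.ne_iff.1 hc
  let T : Finset {j // j ≠ i} := {j | c j ≠ 0}
  refine ⟨i, T, fun j => (c i)⁻¹ * c j, ?_, ?_⟩
  · have hins : insert i (T.map (Function.Embedding.subtype _)) =
        Finset.univ.filter fun j => c j ≠ 0 := by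
      ext j
      by_cases h : j = i <;> simp_all [T]
    rw [← Finset.coe_filter_univ, Set.ncard_coe_finset, ← hins,
      Finset.card_insert_of_notMem (by simp), Finset.card_map] at hcard
    omega
  · have hsum : v i + ∑ j ∈ T, ((c i)⁻¹ * c j) • v j = (c i)⁻¹ • ∑ j, c j • v j := by
      rw [Fintype.sum_eq_add_sum_subtype_ne _ i, smul_add, inv_smul_smul₀ hi, Finset.smul_sum]
      simp only [mul_smul]
      exact congrArg _ (Finset.sum_filter_of_ne fun j _ hj h => hj (by simp [h]))
    exact hsum ▸ hZ _ (inv_ne_zero hi) _ hcv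

theorem dense_setOf_forall_sum_smul_notMem [Countable κ] {d : ℕ} {F : κ → P → E}
    (hF : ∀ k, ContDiff ℝ 1 (F k)) (hd : d + finrank ℝ P < finrank ℝ E) {Z : Set E}
    (hZF : Z ⊆ ⋃ k, Set.range (F k)) (hZ : ∀ t : ℝ, t ≠ 0 → ∀ z ∈ Z, t • z ∈ Z) :
    Dense {v : ι → E | ∀ c : ι → ℝ, c ≠ 0 → {i | c i ≠ 0}.ncard ≤ d + 1 →
      ∑ i, c i • v i ∉ Z} := by
  rcases isEmpty_or_nonempty ι with hι | hι
  · exact dense_univ.mono fun v _ c hc => absurd (Subsingleton.elim c 0) hc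
  let bad : Set (ι → E) := ⋃ (i : ι) (T : {T : Finset {j // j ≠ i} // T.card ≤ d}) (k : κ),
    {v | ∃ c : {j // j ≠ i} → ℝ, v i + ∑ j ∈ T.1, c j • v j ∈ Set.range (F k)}
  have hbad : dimH bad < finrank ℝ (ι → E) := by
    refine lt_of_le_of_lt (b := (((Fintype.card ι - 1) * finrank ℝ E + d + finrank ℝ P : ℕ) :
      ENNReal)) ?_ ?_
    · simp only [bad, dimH_iUnion]
      refine iSup_le fun i => iSup_le fun T => iSup_le fun k =>
        (dimH_setOf_exists_add_sum_smul_mem_range_le (hF k) i T.1).trans ?_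
      have := T.2
      gcongr
    · obtain ⟨N, hN⟩ := Nat.exists_eq_add_one.2 (Fintype.card_pos (α := ι))
      rw [Module.finrank_pi_fintype, Finset.sum_const, Finset.card_univ, hN, smul_eq_mul,
        add_one_mul, Nat.add_sub_cancel]
      exact_mod_cast (by omega)
  refine (dense_compl_of_dimH_lt_finrank hbad).mono ?_
  intro v hv c hc hcard hcv
  refine hv ?_
  obtain ⟨i, T, c', hT, hmem⟩ := exists_add_sum_smul_mem hZ hc hcard hcv
  obtain ⟨k, hk⟩ := Set.mem_iUnion.1 (hZF hmem)
  exact Set.mem_iUnion.2 ⟨i, Set.mem_iUnion.2 ⟨⟨T, hT⟩, Set.mem_iUnion.2 ⟨k, c', hk⟩⟩⟩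

variable {X : Type*} [TopologicalSpace X] [CompactSpace X] [T2Space X] {d : ℕ}

theorem HasCovDimLE.exists_partitionOfUnity (hX : HasCovDimLE X d) {α : Type*} {U : α → Set X}
    (hU : ∀ a, IsOpen (U a)) (hUX : ⋃ a, U a = Set.univ) :
    ∃ (s : Finset (Set X)) (ρ : PartitionOfUnity s X),
      (∀ V, ∃ a, tsupport (ρ V) ⊆ U a) ∧ ∀ x, {V | ρ V x ≠ 0}.ncard ≤ d + 1 := by
  obtain ⟨𝒱, hVo, hVX, hVU, hVd⟩ := hX (Set.range U) (Set.forall_mem_range.2 hU) hUX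
  obtain ⟨s, hs𝒱, hsX⟩ := isCompact_univ.elim_finite_subcover_image (c := id) hVo
    (by rw [← hVX, Set.sUnion_eq_biUnion]; rfl)
  lift s to Finset (Set X) using hsX.1
  obtain ⟨ρ, hρ⟩ := PartitionOfUnity.exists_isSubordinate isClosed_univ (fun V : s => V.1)
    (fun V => hVo V (hs𝒱 V.2)) (hsX.2.trans_eq (Set.biUnion_eq_iUnion _ _))
  refine ⟨s, ρ, fun V => ?_, fun x => ?_⟩
  · obtain ⟨_, ⟨a, rfl⟩, hVa⟩ := hVU V (hs𝒱 V.2)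
    exact ⟨a, (hρ V).trans hVa⟩
  · have hmaps : ∀ V ∈ {V | ρ V x ≠ 0}, V.1 ∈ {V ∈ 𝒱 | x ∈ V} :=
      fun V hV => ⟨hs𝒱 V.2, hρ V (subset_tsupport _ hV)⟩
    exact (Set.ncard_le_ncard_of_injOn _ hmaps Subtype.val_injective.injOn (hVd x).1).trans
      (hVd x).2

theorem HasCovDimLE.dense_setOf_forall_notMem (hX : HasCovDimLE X d) [Countable κ]
    {F : κ → P → E} (hF : ∀ k, ContDiff ℝ 1 (F k)) (hd : d + finrank ℝ P < finrank ℝ E)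
    {Z : Set E} (hZF : Z ⊆ ⋃ k, Set.range (F k)) (hZ : ∀ t : ℝ, t ≠ 0 → ∀ z ∈ Z, t • z ∈ Z) :
    Dense {f : C(X, E) | ∀ x, f x ∉ Z} := by
  refine Metric.dense_iff.2 fun f ε hε => ?_
  obtain ⟨s, ρ, hρ, hρd⟩ := hX.exists_partitionOfUnity
    (U := fun y => f ⁻¹' Metric.ball (f y) (ε / 2))
    (fun y => Metric.isOpen_ball.preimage f.continuous)
    (Set.eq_univ_of_forall fun x => Set.mem_iUnion.2 ⟨x, Metric.mem_ball_self (half_pos hε)⟩)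
  choose y hy using hρ
  obtain ⟨v, hv, hvZ⟩ := Metric.dense_iff.1
    (dense_setOf_forall_sum_smul_notMem hF hd hZF hZ) (fun V => f (y V)) (ε / 2) (half_pos hε)
  refine ⟨⟨fun x => ∑ V, ρ V x • v V, by fun_prop⟩, ?_, fun x => hvZ (ρ · x) ?_ (hρd x)⟩
  · refine (ContinuousMap.dist_lt_iff hε).2 fun x => ?_
    have hball : ∀ V, ρ V x ≠ 0 → v V ∈ Metric.ball (f x) ε := fun V hV =>
      calc dist (v V) (f x) ≤ dist (v V) (f (y V)) + dist (f x) (f (y V)) :=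
            dist_triangle_right _ _ _
        _ < ε / 2 + ε / 2 := add_lt_add ((dist_le_pi_dist v _ V).trans_lt hv)
            (hy V (subset_tsupport _ hV))
        _ = ε := add_halves ε
    have hmem := ρ.finsum_smul_mem_convex (g := fun V _ => v V) (Set.mem_univ x) hball
      (convex_ball _ _)
    rwa [finsum_eq_sum_of_fintype] at hmem
  · obtain ⟨V, hV⟩ := ρ.exists_pos (Set.mem_univ x)
    exact Function.ne_iff.2 ⟨V, hV.ne'⟩

end GeneralPosition

section LinearIndependent

theorem exists_eq_sum_smul_succAbove_of_not_linearIndependent {K V : Type*} [Field K]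
    [AddCommGroup V] [Module K V] {l : ℕ} {v : Fin (l + 1) → V} (hv : ¬LinearIndependent K v) :
    ∃ (i : Fin (l + 1)) (c : Fin l → K), v i = ∑ j, c j • v (i.succAbove j) := by
  obtain ⟨c, hc, i, hi⟩ := Fintype.not_linearIndependent_iff.1 hv
  rw [Fin.sum_univ_succAbove _ i, add_eq_zero_iff_eq_neg] at hc
  refine ⟨i, fun j => -((c i)⁻¹ * c (i.succAbove j)), ?_⟩
  rw [← inv_smul_smul₀ hi (v i), hc, smul_neg, Finset.smul_sum, ← Finset.sum_neg_distrib]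
  simp only [mul_smul, neg_smul]

variable {𝕜 E X : Type*} [RCLike 𝕜] [NormedAddCommGroup E] [NormedSpace 𝕜 E] [NormedSpace ℝ E]
  [IsScalarTower ℝ 𝕜 E] [FiniteDimensional 𝕜 E]
  [TopologicalSpace X] [CompactSpace X] [T2Space X] {d l : ℕ}

theorem HasCovDimLE.dense_setOf_forall_linearIndependent (hX : HasCovDimLE X d)
    (hl : l + d / finrank ℝ 𝕜 ≤ finrank 𝕜 E) :
    Dense {f : C(X, Fin l → E) | ∀ x, LinearIndependent 𝕜 (f x)} := by
  rcases l with - | l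
  · exact dense_univ.mono fun f _ x => linearIndependent_empty_type
  have : FiniteDimensional ℝ E := Module.Finite.trans 𝕜 E
  let F (i : Fin (l + 1)) (q : (Fin l → 𝕜) × (Fin l → E)) : Fin (l + 1) → E :=
    i.insertNth (∑ j, q.1 j • q.2 j) q.2
  have hF : ∀ i, ContDiff ℝ 1 (F i) := fun i => by
    refine contDiff_pi.2 ((Fin.forall_iff_succAbove i).2 ⟨?_, fun j => ?_⟩)
    · simp only [F, Fin.insertNth_apply_same]
      fun_prop
    · simp only [F, Fin.insertNth_apply_succAbove]
      fun_prop
  have hdim : d + finrank ℝ ((Fin l → 𝕜) × (Fin l → E)) < finrank ℝ (Fin (l + 1) → E) := by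
    have hdiv := Nat.lt_mul_div_succ d (Module.finrank_pos (R := ℝ) (M := 𝕜))
    have hmul := Nat.mul_le_mul_left (finrank ℝ 𝕜) hl
    simp only [Module.finrank_prod, Module.finrank_pi_fintype, Finset.sum_const,
      Finset.card_univ, Fintype.card_fin, smul_eq_mul, ← Module.finrank_mul_finrank ℝ 𝕜 E]
    linarith
  have hZ := hX.dense_setOf_forall_notMem hF hdim
    (Z := {v : Fin (l + 1) → E | ¬LinearIndependent 𝕜 v}) ?_ ?_
  · simpa only [Set.mem_ofPred_eq, not_not] using hZ
  · intro v hv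
    obtain ⟨i, c, hc⟩ := exists_eq_sum_smul_succAbove_of_not_linearIndependent hv
    refine Set.mem_iUnion.2 ⟨i, (c, i.removeNth v), ?_⟩
    simp [F, Fin.removeNth, ← hc]
  · intro t ht v hv hli
    refine hv ?_
    convert hli.group_smul fun _ => (Units.mk0 t ht)⁻¹
    exact (inv_smul_smul (Units.mk0 t ht) v).symm

end LinearIndependent

section Rank

universe u

theorem le_rank_iff_exists_det_mul_mul_ne_zero {K p n : Type*} [Field K] [Fintype p]
    [Fintype n] {l : ℕ} {M : Matrix p n K} :
    l ≤ M.rank ↔ ∃ (A : Matrix (Fin l) p K) (R : Matrix n (Fin l) K), (A * M * R).det ≠ 0 := by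
  classical
  constructor
  · intro h
    obtain ⟨v, hv⟩ := exists_linearIndependent_of_le_finrank h
    choose u hu using fun i => (v i).2
    let R : Matrix n (Fin l) K := .of fun i j => u j i
    have hcol : (M * R).col = fun j => (v j : p → K) := funext hu
    have hker : LinearMap.ker (M * R).mulVecLin = ⊥ := by
      rw [LinearMap.ker_eq_bot, Matrix.coe_mulVecLin, Matrix.mulVec_injective_iff, hcol]
      exact hv.map' (Submodule.subtype _) (Submodule.ker_subtype _)
    obtain ⟨f, hf⟩ := LinearMap.exists_leftInverse_of_injective _ hker
    refine ⟨LinearMap.toMatrix' f, R, ?_⟩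
    have hinv : LinearMap.toMatrix' f * M * R = 1 := by
      rw [Matrix.mul_assoc, ← LinearMap.toMatrix'_toLin' (M * R), ← LinearMap.toMatrix'_comp,
        Matrix.toLin'_apply', hf, LinearMap.toMatrix'_id]
    rw [hinv, Matrix.det_one]
    exact one_ne_zero
  · rintro ⟨A, R, h⟩
    calc l = (A * M * R).rank := by rw [Matrix.rank_of_det_ne_zero h, Fintype.card_fin]
      _ ≤ (A * M).rank := Matrix.rank_mul_le_left _ _
      _ ≤ M.rank := Matrix.rank_mul_le_right _ _

theorem isOpen_setOf_le_rank {K p n : Type*} [Field K] [TopologicalSpace K]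
    [IsTopologicalRing K] [T1Space K] [Finite p] [Fintype n] (l : ℕ) :
    IsOpen {M : Matrix p n K | l ≤ M.rank} := by
  cases nonempty_fintype p
  simp only [le_rank_iff_exists_det_mul_mul_ne_zero, Set.ofPred_exists]
  exact isOpen_iUnion fun A => isOpen_iUnion fun R => isOpen_ne.preimage (by fun_prop)

theorem exists_continuousMap_forall_mul_eq {𝕜 ι n : Type*} [RCLike 𝕜] [Fintype ι]
    [DecidableEq ι] [Finite n] {X : Type u} [TopologicalSpace X] [NormalSpace X] {K : Set X}
    (hK : IsClosed K) {D : C(X, Matrix ι ι 𝕜)} (hD : ∀ x ∈ K, (D x).det ≠ 0)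
    (B : C(X, Matrix ι n 𝕜)) :
    ∃ g : C(X, Matrix ι n 𝕜), ∀ x ∈ K, D x * g x = B x := by
  have hdet : Continuous fun x : K => (D x).det := by fun_prop
  have hsol : Continuous fun x : K => (D x).det⁻¹ • ((D x).adjugate * B x) :=
    (hdet.inv₀ fun x => hD x x.2).smul (by fun_prop)
  have : TietzeExtension.{u} (Matrix ι n 𝕜) := .of_tvs 𝕜
  obtain ⟨g, hg⟩ := ContinuousMap.exists_restrict_eq hK ⟨_, hsol⟩
  refine ⟨g, fun x hx => ?_⟩
  have hgx : g x = (D x).det⁻¹ • ((D x).adjugate * B x) := DFunLike.congr_fun hg ⟨x, hx⟩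
  rw [hgx, Matrix.mul_smul, ← Matrix.mul_assoc, Matrix.mul_adjugate, Matrix.smul_mul,
    Matrix.one_mul, inv_smul_smul₀ (hD x hx)]

variable {𝕜 X p n : Type*} [RCLike 𝕜] [TopologicalSpace X] [Fintype n] {d l m : ℕ}

theorem isOpen_setOf_forall_mem_le_rank_mul [LocallyCompactSpace X] [Finite p]
    (a : C(X, Matrix p n 𝕜)) {K : Set X} (hK : IsCompact K) :
    IsOpen {S : C(X, Matrix n (Fin m) 𝕜) | ∀ x ∈ K, l ≤ (a x * S x).rank} := by
  let Φ (S : C(X, Matrix n (Fin m) 𝕜)) : C(X, Matrix p (Fin m) 𝕜) :=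
    ⟨fun x => a x * S x, by fun_prop⟩
  have hΦ : Continuous Φ := ContinuousMap.continuous_of_continuous_uncurry _ <| by
    change Continuous fun q : C(X, Matrix n (Fin m) 𝕜) × X => a q.2 * q.1 q.2
    fun_prop
  exact (ContinuousMap.isOpen_setOfPred_mapsTo hK (isOpen_setOf_le_rank l)).preimage hΦ

variable [CompactSpace X] [T2Space X]

theorem HasCovDimLE.dense_setOf_forall_mem_le_rank_mul [Fintype p] (hX : HasCovDimLE X d)
    (hm : l + d / finrank ℝ 𝕜 ≤ m) (a : C(X, Matrix p n 𝕜)) {K : Set X} (hK : IsClosed K)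
    {A : Matrix (Fin l) p 𝕜} {R : Matrix n (Fin l) 𝕜} (hdet : ∀ x ∈ K, (A * a x * R).det ≠ 0) :
    Dense {S : C(X, Matrix n (Fin m) 𝕜) | ∀ x ∈ K, l ≤ (a x * S x).rank} := by
  intro S
  obtain ⟨g₀, hg₀⟩ := exists_continuousMap_forall_mul_eq hK
    (D := ⟨fun x => A * a x * R, by fun_prop⟩) hdet ⟨fun x => A * a x * S x, by fun_prop⟩
  let Ψ (g : C(X, Matrix (Fin l) (Fin m) 𝕜)) : C(X, Matrix n (Fin m) 𝕜) :=
    ⟨fun x => S x + R * (g x - g₀ x), by fun_prop⟩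
  have hΨ : Continuous Ψ := ContinuousMap.continuous_of_continuous_uncurry _ <| by
    change Continuous fun q : C(X, Matrix (Fin l) (Fin m) 𝕜) × X =>
      S q.2 + R * (q.1 q.2 - g₀ q.2)
    fun_prop
  have hΨg₀ : Ψ g₀ = S := by
    ext1 x
    simp [Ψ]
  have hΨmul : ∀ g, ∀ x ∈ K, A * (a x * Ψ g x) = A * a x * R * g x := fun g x hx => by
    have := hg₀ x hx
    simp only [ContinuousMap.coe_mk] at this
    simp only [Ψ, ContinuousMap.coe_mk, ← Matrix.mul_assoc, Matrix.mul_add, Matrix.mul_sub, this]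
    abel
  refine hΨg₀ ▸ map_mem_closure hΨ (hX.dense_setOf_forall_linearIndependent
    (E := Fin m → 𝕜) (by rwa [Module.finrank_fin_fun]) g₀) fun g hg x hx => ?_
  calc l = (g x).rank := by
        rw [LinearIndependent.rank_matrix (M := g x) (hg x), Fintype.card_fin]
    _ = (A * (a x * Ψ g x)).rank := by
      rw [hΨmul g x hx]
      exact (Matrix.rank_mul_eq_right_of_det_ne_zero _ _ (hdet x hx)).symm
    _ ≤ (a x * Ψ g x).rank := Matrix.rank_mul_le_right _ _

theorem HasCovDimLE.dense_setOf_forall_le_rank_mul [Finite p] (hX : HasCovDimLE X d)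
    (hm : l + d / finrank ℝ 𝕜 ≤ m) (a : C(X, Matrix p n 𝕜)) (ha : ∀ x, l ≤ (a x).rank) :
    Dense {S : C(X, Matrix n (Fin m) 𝕜) | ∀ x, l ≤ (a x * S x).rank} := by
  cases nonempty_fintype p
  have hlocal : ∃ K : Set X, Set.univ ⊆ K ∧ IsCompact K ∧
      Dense {S : C(X, Matrix n (Fin m) 𝕜) | ∀ x ∈ K, l ≤ (a x * S x).rank} := by
    refine isCompact_univ.induction_on ⟨∅, by simp⟩ ?_ ?_ fun x₀ _ => ?_
    · exact fun s t hst ⟨K, htK, hK⟩ => ⟨K, hst.trans htK, hK⟩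
    · rintro s t ⟨K, hsK, hK, hKd⟩ ⟨L, htL, hL, hLd⟩
      refine ⟨K ∪ L, Set.union_subset_union hsK htL, hK.union hL, ?_⟩
      refine (hKd.inter_of_isOpen_left hLd (isOpen_setOf_forall_mem_le_rank_mul a hK)).mono ?_
      refine fun S hS x hx => hx.elim (fun h => ?_) fun h => ?_
      exacts [hS.1 x h, hS.2 x h]
    · obtain ⟨A, R, hdet⟩ := le_rank_iff_exists_det_mul_mul_ne_zero.1 (ha x₀)
      obtain ⟨K, hK, hxK, hKdet⟩ := exists_compact_subset
        (U := {x | (A * a x * R).det ≠ 0}) (isOpen_ne.preimage (by fun_prop)) hdet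
      exact ⟨K, mem_nhdsWithin_of_mem_nhds (mem_interior_iff_mem_nhds.1 hxK), K, subset_rfl, hK,
        hX.dense_setOf_forall_mem_le_rank_mul hm a hK.isClosed hKdet⟩
  obtain ⟨K, hK, -, hdense⟩ := hlocal
  refine hdense.mono fun S hS x => ?_
  exact hS x (hK (Set.mem_univ x))

end Rank

section PosSemidef

variable {𝕜 n : Type*} [RCLike 𝕜] [Fintype n]

theorem rank_le_rank_add_of_posSemidef {A B : Matrix n n 𝕜} (hA : A.PosSemidef)
    (hB : B.PosSemidef) : A.rank ≤ (A + B).rank := by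
  have hker : LinearMap.ker (A + B).mulVecLin ≤ LinearMap.ker A.mulVecLin := fun v hv => by
    rw [LinearMap.mem_ker, Matrix.mulVecLin_apply] at hv ⊢
    have hsum : star v ⬝ᵥ A.mulVec v + star v ⬝ᵥ B.mulVec v = 0 := by
      rw [← dotProduct_add, ← Matrix.add_mulVec, hv, dotProduct_zero]
    exact (hA.dotProduct_mulVec_zero_iff v).1 ((add_eq_zero_iff_of_nonneg
      (hA.dotProduct_mulVec_nonneg v) (hB.dotProduct_mulVec_nonneg v)).1 hsum).1
  have hAdim := LinearMap.finrank_range_add_finrank_ker A.mulVecLin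
  have hABdim := LinearMap.finrank_range_add_finrank_ker (A + B).mulVecLin
  have := Submodule.finrank_mono hker
  unfold Matrix.rank
  omega

theorem convex_setOf_posSemidef_le_rank (l : ℕ) :
    Convex ℝ {M : Matrix n n 𝕜 | M.PosSemidef ∧ l ≤ M.rank} := by
  rintro A ⟨hA, hlA⟩ B ⟨hB, hlB⟩ s t hs ht hst
  refine ⟨(hA.smul hs).add (hB.smul ht), ?_⟩
  rcases hs.eq_or_lt with rfl | hs'
  · rw [zero_add] at hst
    rwa [hst, zero_smul, zero_add, one_smul]
  · calc l ≤ A.rank := hlA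
      _ = (s • A).rank := by
        rw [RCLike.real_smul_eq_coe_smul (K := 𝕜), Matrix.rank_smul_of_mem_nonZeroDivisors]
        exact mem_nonZeroDivisors_of_ne_zero (RCLike.ofReal_ne_zero.2 hs'.ne')
      _ ≤ (s • A + t • B).rank := rank_le_rank_add_of_posSemidef (hA.smul hs) (hB.smul ht)

theorem exists_posSemidef_rank_eq {r : ℕ} (hr : r ≤ Fintype.card n) :
    ∃ P : Matrix n n 𝕜, P.PosSemidef ∧ P.rank = r := by
  classical
  obtain ⟨s, -, hs⟩ := Finset.exists_subset_card_eq (s := Finset.univ (α := n)) hr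
  refine ⟨Matrix.diagonal fun i => if i ∈ s then 1 else 0,
    Matrix.posSemidef_diagonal_iff.2 fun i => ?_, ?_⟩
  · split_ifs <;> simp
  · simp [Matrix.rank_diagonal, hs]

end PosSemidef

section Homotopy

/-- The positive elements of `M_n(C(X))` whose rank function takes values in `[l, k]`. Paths in
this set are the homotopies of positive elements with these rank bounds. -/
def posSemidefRankIcc (𝕜 X n : Type*) [RCLike 𝕜] [TopologicalSpace X] [Fintype n] (l k : ℕ) :
    Set C(X, Matrix n n 𝕜) :=
  {a | ∀ x, (a x).PosSemidef ∧ (a x).rank ∈ Set.Icc l k}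

variable {𝕜 X n : Type*} [RCLike 𝕜] [TopologicalSpace X] [Fintype n] {d k l m r : ℕ}

theorem joinedIn_posSemidefRankIcc {f g : C(X, Matrix n n 𝕜)}
    (hf : ∀ x, (f x).PosSemidef ∧ l ≤ (f x).rank) (hg : ∀ x, (g x).PosSemidef ∧ l ≤ (g x).rank)
    (hk : ∀ x, finrank 𝕜 ↥((f x).mulVecLin.range ⊔ (g x).mulVecLin.range) ≤ k) :
    JoinedIn (posSemidefRankIcc 𝕜 X n l k) f g := by
  refine JoinedIn.of_segment_subset ?_
  rintro _ ⟨s, t, hs, ht, hst, rfl⟩ x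
  obtain ⟨hpos, hle⟩ := convex_setOf_posSemidef_le_rank l (hf x) (hg x) hs ht hst
  have hrange : (s • f x + t • g x).mulVecLin.range ≤
      (f x).mulVecLin.range ⊔ (g x).mulVecLin.range := by
    rintro _ ⟨v, rfl⟩
    rw [Matrix.mulVecLin_apply, Matrix.add_mulVec, Matrix.smul_mulVec, Matrix.smul_mulVec]
    exact Submodule.add_mem_sup (Submodule.smul_of_tower_mem _ s ⟨v, rfl⟩)
      (Submodule.smul_of_tower_mem _ t ⟨v, rfl⟩)
  exact ⟨hpos, hle, (Submodule.finrank_mono hrange).trans (hk x)⟩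

theorem joinedIn_posSemidefRankIcc_add_const {b : C(X, Matrix n n 𝕜)}
    (hb : b ∈ posSemidefRankIcc 𝕜 X n l m) {P : Matrix n n 𝕜} (hP : P.PosSemidef)
    (hk : m + P.rank ≤ k) :
    JoinedIn (posSemidefRankIcc 𝕜 X n l k) b (b + .const X P) := by
  refine joinedIn_posSemidefRankIcc (fun x => ⟨(hb x).1, (hb x).2.1⟩) (fun x => ⟨(hb x).1.add hP,
    (hb x).2.1.trans (rank_le_rank_add_of_posSemidef (hb x).1 hP)⟩) fun x => ?_
  have hrange : (b x).mulVecLin.range ⊔ (b x + P).mulVecLin.range ≤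
      (b x).mulVecLin.range ⊔ P.mulVecLin.range :=
    sup_le le_sup_left (Matrix.mulVecLin_add (b x) P ▸ LinearMap.range_add_le _ _)
  calc _ ≤ _ := Submodule.finrank_mono hrange
    _ ≤ (b x).rank + P.rank := Submodule.finrank_add_le_finrank_add_finrank _ _
    _ ≤ k := (Nat.add_le_add_right (hb x).2.2 _).trans hk

variable [CompactSpace X] [T2Space X]

theorem HasCovDimLE.exists_joinedIn_posSemidefRankIcc (hX : HasCovDimLE X d)
    (hm : l + d / finrank ℝ 𝕜 ≤ m) {a : C(X, Matrix n n 𝕜)}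
    (ha : a ∈ posSemidefRankIcc 𝕜 X n l k) :
    ∃ b ∈ posSemidefRankIcc 𝕜 X n l m, JoinedIn (posSemidefRankIcc 𝕜 X n l k) a b := by
  obtain ⟨S, hS⟩ := (hX.dense_setOf_forall_le_rank_mul hm a fun x => (ha x).2.1).nonempty
  let b : C(X, Matrix n n 𝕜) := ⟨fun x => a x * S x * (a x * S x).conjTranspose, by fun_prop⟩
  have hpos : ∀ x, (b x).PosSemidef := fun x =>
    Matrix.posSemidef_self_mul_conjTranspose (a x * S x)
  have hrank : ∀ x, (b x).rank = (a x * S x).rank := fun x =>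
    Matrix.rank_self_mul_conjTranspose (a x * S x)
  have hle : ∀ x, l ≤ (b x).rank := fun x => (hS x).trans_eq (hrank x).symm
  have hrange : ∀ x, (b x).mulVecLin.range ≤ (a x).mulVecLin.range := fun x => by
    simp only [b, ContinuousMap.coe_mk, Matrix.mul_assoc, Matrix.mulVecLin_mul (a x)]
    exact LinearMap.range_comp_le_range _ _
  have hwidth : ∀ x, (b x).rank ≤ m := fun x =>
    (hrank x).trans_le ((Matrix.rank_le_card_width _).trans_eq (Fintype.card_fin m))
  refine ⟨b, fun x => ⟨hpos x, hle x, hwidth x⟩, ?_⟩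
  refine joinedIn_posSemidefRankIcc (fun x => ⟨(ha x).1, (ha x).2.1⟩)
    (fun x => ⟨hpos x, hle x⟩) fun x => ?_
  rw [sup_eq_left.2 (hrange x)]
  exact (ha x).2.2

theorem stmt3_general (hX : HasCovDimLE X d) (hk : l + d / finrank ℝ 𝕜 + r ≤ k)
    (hr : r ≤ Fintype.card n) (a : C(X, Matrix n n 𝕜)) (ha : ∀ x, (a x).PosSemidef)
    (hrank : ∀ x, l ≤ (a x).rank ∧ (a x).rank ≤ k) :
    ∃ h : C(I, C(X, Matrix n n 𝕜)),
      (∀ (t : I) (x : X), ((h t) x).PosSemidef) ∧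
      h 0 = a ∧
      (∀ (t : I) (x : X), l ≤ ((h t) x).rank ∧ ((h t) x).rank ≤ k) ∧
      (∀ x : X, r ≤ ((h 1) x).rank) := by
  obtain ⟨b, hb, hab⟩ := hX.exists_joinedIn_posSemidefRankIcc le_rfl fun x => ⟨ha x, hrank x⟩
  obtain ⟨P, hP, rfl⟩ := exists_posSemidef_rank_eq (𝕜 := 𝕜) hr
  obtain ⟨γ, hγ⟩ := hab.trans (joinedIn_posSemidefRankIcc_add_const hb hP hk)
  refine ⟨γ.toContinuousMap, fun t x => (hγ t x).1, γ.source, fun t x => (hγ t x).2, fun x => ?_⟩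
  calc P.rank ≤ (P + b x).rank := rank_le_rank_add_of_posSemidef hP (hb x).1
    _ = (γ 1 x).rank := by rw [γ.target, add_comm]; rfl

end Homotopy

/-- Let `a ∈ M_n(C(X))` be positive on a compact metric space `X` of finite
covering dimension `d`, with `k ≤ n`, `l ≤ d`, `4d ≤ k - l`, and `l ≤ rank(a(x)) ≤ k` for
all `x`.  Then there is a homotopy `h` of positive elements with `h 0 = a`, ranks staying in
`[l, k]`, and `rank(h 1 (x)) ≥ l + d` everywhere. -/
theorem stmt3 {X : Type*} [MetricSpace X] [CompactSpace X] (d : ℕ) (hdim : IsCovDim X d)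
    (n l k : ℕ) (hn : 0 < n) (hkn : k ≤ n) (hld : l ≤ d) (hlk : l + 4 * d ≤ k)
    (a : C(X, Matrix (Fin n) (Fin n) ℂ)) (ha : ∀ x, (a x).PosSemidef)
    (hrank : ∀ x, l ≤ (a x).rank ∧ (a x).rank ≤ k) :
    ∃ h : C(I, C(X, Matrix (Fin n) (Fin n) ℂ)),
      (∀ (t : I) (x : X), ((h t) x).PosSemidef) ∧
      h 0 = a ∧
      (∀ (t : I) (x : X), l ≤ ((h t) x).rank ∧ ((h t) x).rank ≤ k) ∧
      (∀ x : X, l + d ≤ ((h 1) x).rank) :=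
  stmt3_general hdim.1 (by rw [Complex.finrank_real_complex]; omega)
    (by rw [Fintype.card_fin]; omega) a ha hrank
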